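/- There exists a constant c > 0 such that for every real normed space X, every N ∈ ℕ with N ≥ 1 and every finite sequence δ_1, …, δ_N in X one has Σ_{i=1}^N ‖δ_i‖_X² ≤ c ( ‖δ_1‖_X² + Σ_{i=2}^N ‖(3/2)δ_i − (1/2)δ_{i−1}‖_X² ). -/

import Mathlib

/-! With `e = ‖(3/2)δ_i − (1/2)δ_{i−1}‖`, the triangle inequality gives
`3‖δ_i‖ ≤ 2e + ‖δ_{i−1}‖`, hence `2‖δ_i‖² ≤ 2e² + ‖δ_{i−1}‖²`. Because the previous term
enters with a smaller coefficient, this telescopes: induction on `N` proves the bound with `c = 2`,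
once the left side is strengthened by the extra summand `‖δ_N‖²`. -/

lemma two_mul_norm_sq_le {X : Type*} [NormedAddCommGroup X] [NormedSpace ℝ X] (x y : X) :
    2 * ‖x‖ ^ 2 ≤ 2 * ‖(3 / 2 : ℝ) • x - (1 / 2 : ℝ) • y‖ ^ 2 + ‖y‖ ^ 2 := by
  have h := norm_sub_norm_le ((3 / 2 : ℝ) • x) ((1 / 2 : ℝ) • y)
  rw [norm_smul, norm_smul, Real.norm_of_nonneg (by norm_num),
    Real.norm_of_nonneg (by norm_num)] at h
  set e := ‖(3 / 2 : ℝ) • x - (1 / 2 : ℝ) • y‖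
  have h3 : 3 * ‖x‖ ≤ 2 * e + ‖y‖ := by linarith
  have hsq : (3 * ‖x‖) ^ 2 ≤ (2 * e + ‖y‖) ^ 2 := by gcongr
  nlinarith [sq_nonneg (2 * e - ‖y‖), sq_nonneg e, sq_nonneg ‖y‖]

/-- There is a universal constant `c > 0` such that for every real normed space `X`,
every `N ≥ 1` and every finite sequence `δ_1, …, δ_N` in `X`,
`Σ_{i=1}^N ‖δ_i‖² ≤ c (‖δ_1‖² + Σ_{i=2}^N ‖(3/2)δ_i − (1/2)δ_{i−1}‖²)`. -/
theorem double_step_sum_bound.{u} :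
    ∃ c : ℝ, 0 < c ∧
      ∀ (X : Type u) (_ : NormedAddCommGroup X) (_ : NormedSpace ℝ X)
        (N : ℕ), 1 ≤ N → ∀ δ : ℕ → X,
        ∑ i ∈ Finset.Icc 1 N, ‖δ i‖ ^ 2 ≤
          c * (‖δ 1‖ ^ 2 +
            ∑ i ∈ Finset.Icc 2 N, ‖(3 / 2 : ℝ) • δ i - (1 / 2 : ℝ) • δ (i - 1)‖ ^ 2) := by
  refine ⟨2, by norm_num, fun X _ _ N hN δ => ?_⟩
  suffices h : ∑ i ∈ Finset.Icc 1 N, ‖δ i‖ ^ 2 + ‖δ N‖ ^ 2 ≤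
      2 * (‖δ 1‖ ^ 2 +
        ∑ i ∈ Finset.Icc 2 N, ‖(3 / 2 : ℝ) • δ i - (1 / 2 : ℝ) • δ (i - 1)‖ ^ 2) by
    linarith [sq_nonneg ‖δ N‖]
  induction N, hN using Nat.le_induction with
  | base => simp [two_mul]
  | succ n hn ih =>
    rw [Finset.sum_Icc_succ_top (by omega), Finset.sum_Icc_succ_top (by omega),
      Nat.add_sub_cancel]
    linarith [two_mul_norm_sq_le (δ (n + 1)) (δ n)]
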